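/- Let α ∈ (0,1) and λ > 0. The function η(t) = E_α(−λ t^α) satisfies the Volterra integral equation equivalent to the Caputo initial value problem with η(0) = 1: for every t ≥ 0, E_α(−λ t^α) = 1 − (λ/Γ(α)) ∫_0^t (t−s)^(α−1) E_α(−λ s^α) ds. -/

import Mathlib

/-- The Mittag-Leffler function `E_α(x) = ∑_{k=0}^∞ x^k / Γ(αk + 1)`. -/
noncomputable def mittagLeffler (α x : ℝ) : ℝ :=
  ∑' k : ℕ, x ^ k / Real.Gamma (α * k + 1)

/-!
The `k`-th term of the series for `E_α(c t^α)` is a multiple of the power `t ^ (α k)`. By Euler's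
beta integral, the fractional integral `I^α` sends a power of `t` to a power of `t`, and the
constants are such that `c I^α` shifts the terms of the series by one. Dominated convergence lets
`I^α` act term by term, so `c I^α` applied to the series removes its constant term.
-/

open Filter MeasureTheory Real Set

theorem rpow_mul_Gamma_add_one_le {x a : ℝ} (hx : 0 < x) (ha : 0 < a) :
    x ^ a * Gamma (x + 1) ≤ Gamma (x + 1 + a) := by
  have hΓ : 0 < Gamma x := Gamma_pos_of_pos hx
  have hΓ₁ : 0 < Gamma (x + 1) := Gamma_pos_of_pos (by positivity)
  have hΓ₂ : 0 < Gamma (x + 1 + a) := Gamma_pos_of_pos (by positivity)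
  have log_Gamma_add_one_sub : log (Gamma (x + 1)) - log (Gamma x) = log x := by
    rw [Gamma_add_one hx.ne', log_mul hx.ne' hΓ.ne', add_sub_cancel_right]
  have slope_le := convexOn_log_Gamma.slope_mono_adjacent (mem_Ioi.2 hx)
    (mem_Ioi.2 (by positivity : 0 < x + 1 + a)) (lt_add_one x) (lt_add_of_pos_right _ ha)
  simp only [Function.comp_apply, add_sub_cancel_left, div_one, log_Gamma_add_one_sub,
    le_div_iff₀ ha] at slope_le
  rw [← log_le_log_iff (by positivity) hΓ₂, log_mul (by positivity) hΓ₁.ne', log_rpow hx]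
  linarith

theorem summable_mittagLeffler {α : ℝ} (hα : 0 < α) (x : ℝ) :
    Summable fun k : ℕ ↦ x ^ k / Gamma (α * k + 1) := by
  refine summable_of_ratio_norm_eventually_le (r := 1 / 2) (by norm_num) ?_
  have tendsto_rpow : Tendsto (fun k : ℕ ↦ (α * k) ^ α) atTop atTop :=
    (tendsto_rpow_atTop hα).comp (tendsto_natCast_atTop_atTop.const_mul_atTop hα)
  filter_upwards [tendsto_rpow.eventually_ge_atTop (2 * |x|), eventually_gt_atTop 0] with k hk hk₀
  have hΓ : 0 < Gamma (α * k + 1) := Gamma_pos_of_pos (by positivity)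
  have hΓ' : 0 < Gamma (α * k + 1 + α) := Gamma_pos_of_pos (by positivity)
  have Gamma_growth : 2 * |x| * Gamma (α * k + 1) ≤ Gamma (α * k + 1 + α) :=
    (mul_le_mul_of_nonneg_right hk hΓ.le).trans (rpow_mul_Gamma_add_one_le (by positivity) hα)
  have index_succ : α * (k + 1 : ℕ) + 1 = α * k + 1 + α := by push_cast; ring
  rw [index_succ, norm_div, norm_div, norm_pow, norm_pow, norm_of_nonneg hΓ.le,
    norm_of_nonneg hΓ'.le, norm_eq_abs, div_le_iff₀ hΓ']
  calc |x| ^ (k + 1)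
      = 1 / 2 * (|x| ^ k / Gamma (α * k + 1)) * (2 * |x| * Gamma (α * k + 1)) := by
        field_simp
        ring
    _ ≤ 1 / 2 * (|x| ^ k / Gamma (α * k + 1)) * Gamma (α * k + 1 + α) := by gcongr

theorem integral_sub_rpow_mul_rpow {u v t : ℝ} (hu : 0 < u) (hv : 0 < v) (ht : 0 < t) :
    ∫ s in (0 : ℝ)..t, (t - s) ^ (v - 1) * s ^ (u - 1) =
      t ^ (u + v - 1) * (Gamma u * Gamma v / Gamma (u + v)) := by
  have ofReal_integrand :
      ∫ s in (0 : ℝ)..t, (s : ℂ) ^ ((u : ℂ) - 1) * ((t : ℂ) - s) ^ ((v : ℂ) - 1) =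
        ∫ s in (0 : ℝ)..t, (((t - s) ^ (v - 1) * s ^ (u - 1) : ℝ) : ℂ) := by
    refine intervalIntegral.integral_congr fun s hs ↦ ?_
    rw [uIcc_of_le ht.le] at hs
    simp only [Complex.ofReal_mul, Complex.ofReal_cpow hs.1,
      Complex.ofReal_cpow (sub_nonneg.2 hs.2), Complex.ofReal_sub, Complex.ofReal_one, mul_comm]
  have beta_scaled := Complex.betaIntegral_scaled (u : ℂ) (v : ℂ) ht
  rw [Complex.betaIntegral_eq_Gamma_mul_div _ _ (by simpa) (by simpa), ofReal_integrand,
    intervalIntegral.integral_ofReal, ← Complex.ofReal_add, Complex.Gamma_ofReal,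
    Complex.Gamma_ofReal, Complex.Gamma_ofReal, ← Complex.ofReal_one, ← Complex.ofReal_sub,
    ← Complex.ofReal_cpow ht.le] at beta_scaled
  exact_mod_cast beta_scaled

section RiemannLiouville

variable {E : Type*} [NormedAddCommGroup E] [NormedSpace ℝ E] {α t : ℝ}

/-- The Riemann–Liouville fractional integral `I^α f` of order `α`, based at `0`, through which the
Volterra equation reads `η = 1 + c I^α η`. It is `0` where the integrand is not integrable. -/
noncomputable def riemannLiouvilleIntegral (α : ℝ) (f : ℝ → E) (t : ℝ) : E :=
  (1 / Gamma α) • ∫ s in (0 : ℝ)..t, (t - s) ^ (α - 1) • f s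

theorem riemannLiouvilleIntegral_congr {f g : ℝ → E} (ht : 0 ≤ t) (hfg : EqOn f g (Icc 0 t)) :
    riemannLiouvilleIntegral α f t = riemannLiouvilleIntegral α g t := by
  unfold riemannLiouvilleIntegral
  congr 1
  refine intervalIntegral.integral_congr fun s hs ↦ ?_
  exact congrArg _ (hfg (uIcc_of_le ht ▸ hs))

theorem riemannLiouvilleIntegral_smul (c : ℝ) (f : ℝ → E) :
    riemannLiouvilleIntegral α (fun s ↦ c • f s) t = c • riemannLiouvilleIntegral α f t := by
  simp only [riemannLiouvilleIntegral, smul_comm _ c, intervalIntegral.integral_smul]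

theorem intervalIntegrable_sub_rpow (hα : 0 < α) :
    IntervalIntegrable (fun s ↦ (t - s) ^ (α - 1)) volume 0 t := by
  simpa using (intervalIntegral.intervalIntegrable_rpow' (a := t) (b := 0)
    (by linarith : -1 < α - 1)).comp_sub_left t

theorem hasSum_riemannLiouvilleIntegral [CompleteSpace E] {ι : Type*} [Countable ι]
    {F : ι → ℝ → E} {M : ι → ℝ} (hα : 0 < α) (ht : 0 ≤ t)
    (hF : ∀ i, AEStronglyMeasurable (F i) (volume.restrict (Ioc 0 t))) (hM : Summable M)
    (hFM : ∀ i, ∀ s ∈ Ioc 0 t, ‖F i s‖ ≤ M i) :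
    HasSum (fun i ↦ riemannLiouvilleIntegral α (F i) t)
      (riemannLiouvilleIntegral α (fun s ↦ ∑' i, F i s) t) := by
  refine HasSum.const_smul _ <| intervalIntegral.hasSum_integral_of_dominated_convergence
    (fun i s ↦ (t - s) ^ (α - 1) * M i) (fun i ↦ ?_) (fun i ↦ .of_forall fun s hs ↦ ?_)
    (.of_forall fun s _ ↦ hM.mul_left _) ?_ (.of_forall fun s hs ↦ ?_)
  · rw [uIoc_of_le ht]
    exact (by fun_prop : Measurable fun s ↦ (t - s) ^ (α - 1)).aestronglyMeasurable.smul (hF i)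
  · rw [uIoc_of_le ht] at hs
    have kernel_nonneg : 0 ≤ (t - s) ^ (α - 1) := rpow_nonneg (sub_nonneg.2 hs.2) _
    rw [norm_smul, norm_of_nonneg kernel_nonneg]
    exact mul_le_mul_of_nonneg_left (hFM i s hs) kernel_nonneg
  · simp only [tsum_mul_left]
    exact (intervalIntegrable_sub_rpow hα).mul_const _
  · rw [uIoc_of_le ht] at hs
    exact (hM.of_norm_bounded fun i ↦ hFM i s hs).hasSum.const_smul _

theorem riemannLiouvilleIntegral_rpow {β : ℝ} (hα : 0 < α) (hβ : -1 < β) (ht : 0 < t) :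
    riemannLiouvilleIntegral α (fun s ↦ s ^ β) t =
      Gamma (β + 1) / Gamma (β + α + 1) * t ^ (β + α) := by
  have hΓ : Gamma α ≠ 0 := (Gamma_pos_of_pos hα).ne'
  have beta_integral := integral_sub_rpow_mul_rpow (by linarith : 0 < β + 1) hα ht
  rw [add_sub_cancel_right, add_right_comm, add_sub_cancel_right] at beta_integral
  simp only [riemannLiouvilleIntegral, smul_eq_mul, beta_integral]
  field_simp

end RiemannLiouville

theorem mul_riemannLiouvilleIntegral_mittagLeffler_term {α t : ℝ} (hα : 0 < α) (ht : 0 ≤ t)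
    (c : ℝ) (k : ℕ) :
    c * riemannLiouvilleIntegral α (fun s ↦ (c * s ^ α) ^ k / Gamma (α * k + 1)) t =
      (c * t ^ α) ^ (k + 1) / Gamma (α * (k + 1 : ℕ) + 1) := by
  rcases ht.eq_or_lt with rfl | ht_pos
  · simp [riemannLiouvilleIntegral, zero_rpow hα.ne']
  have mul_rpow_pow {s : ℝ} (hs : 0 ≤ s) (n : ℕ) : (c * s ^ α) ^ n = c ^ n * s ^ (α * n) := by
    rw [mul_pow, rpow_mul_natCast hs]
  have term_eq : EqOn (fun s ↦ (c * s ^ α) ^ k / Gamma (α * k + 1))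
      (fun s ↦ (c ^ k / Gamma (α * k + 1)) • s ^ (α * k)) (Icc 0 t) := fun s hs ↦ by
    simp only [mul_rpow_pow hs.1, smul_eq_mul, div_mul_eq_mul_div]
  have hβ : -1 < α * k := neg_one_lt_zero.trans_le (by positivity)
  have hΓ : Gamma (α * k + 1) ≠ 0 := (Gamma_pos_of_pos (by positivity)).ne'
  have index_succ : α * k + α = α * (k + 1 : ℕ) := by push_cast; ring
  rw [riemannLiouvilleIntegral_congr ht term_eq, riemannLiouvilleIntegral_smul,
    riemannLiouvilleIntegral_rpow hα hβ ht_pos, index_succ, mul_rpow_pow ht, smul_eq_mul,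
    pow_succ]
  field_simp

theorem hasSum_riemannLiouvilleIntegral_mittagLeffler {α t : ℝ} (hα : 0 < α) (ht : 0 ≤ t) (c : ℝ) :
    HasSum
      (fun k : ℕ ↦ riemannLiouvilleIntegral α (fun s ↦ (c * s ^ α) ^ k / Gamma (α * k + 1)) t)
      (riemannLiouvilleIntegral α (fun s ↦ mittagLeffler α (c * s ^ α)) t) := by
  refine hasSum_riemannLiouvilleIntegral hα ht
    (fun k ↦ (by fun_prop : Measurable _).aestronglyMeasurable)
    (summable_mittagLeffler hα (|c| * t ^ α)) fun k s hs ↦ ?_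
  have hΓ : 0 < Gamma (α * k + 1) := Gamma_pos_of_pos (by positivity)
  rw [norm_div, norm_pow, norm_mul, norm_of_nonneg hΓ.le, norm_eq_abs c,
    norm_of_nonneg (rpow_nonneg hs.1.le α)]
  have rpow_le : s ^ α ≤ t ^ α := rpow_le_rpow hs.1.le hs.2 hα.le
  have := rpow_nonneg hs.1.le α
  gcongr

theorem mittagLeffler_volterra_equation_general {α t : ℝ} (hα : 0 < α) (ht : 0 ≤ t) (c : ℝ) :
    mittagLeffler α (c * t ^ α) =
      1 + c * riemannLiouvilleIntegral α (fun s ↦ mittagLeffler α (c * s ^ α)) t := by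
  have hasSum_tail := (hasSum_riemannLiouvilleIntegral_mittagLeffler hα ht c).mul_left c
  simp only [mul_riemannLiouvilleIntegral_mittagLeffler_term hα ht c] at hasSum_tail
  rw [mittagLeffler, (summable_mittagLeffler hα _).tsum_eq_zero_add, hasSum_tail.tsum_eq]
  simp

theorem mittagLeffler_volterra_equation (α lam : ℝ) (hα : α ∈ Set.Ioo (0:ℝ) 1)
    (hlam : 0 < lam) :
    ∀ t : ℝ, 0 ≤ t →
      mittagLeffler α (-lam * t ^ α) =
        1 - (lam / Real.Gamma α) *
          ∫ s in (0:ℝ)..t, (t - s) ^ (α - 1) * mittagLeffler α (-lam * s ^ α) := by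
  intro t ht
  rw [mittagLeffler_volterra_equation_general hα.1 ht (-lam), riemannLiouvilleIntegral]
  simp only [smul_eq_mul]
  ring
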